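/- arXiv:1904.12298 — 3 statements merged into one kernel-verified Lean document; each statement's English description precedes it below -/
import Mathlib

section
/- Let r ≥ 2 and let m, t be natural numbers with m ∣ t. Consider the action of GL_r(ZMod t) on column vectors in (ZMod m)^r given by matrix multiplication after entrywise reduction along the ring homomorphism ZMod t → ZMod m. Then for any g = (g_1,…,g_r) and h = (h_1,…,h_r) in (ZMod m)^r, there exists A ∈ GL_r(ZMod t) with A·g = h if and only if gcd_m(g_1,…,g_r) = gcd_m(h_1,…,h_r). In other words, the orbit of g under this action is exactly the set of vectors h with gcd_m(h_1,…,h_r) = gcd_m(g_1,…,g_r). -/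
/-- `gcd_m(x_1,…,x_r)`: the gcd of integer representatives of the entries of `x`
together with `m`.  (For `m = 0`, `ZMod 0 = ℤ` and `ZMod.val` is `Int.natAbs`.) -/
def gcdZMod {r m : ℕ} (x : Fin r → ZMod m) : ℕ :=
  Nat.gcd m (Finset.univ.gcd fun i => (x i).val)

/-- The action of `A ∈ GL_r(ZMod t)` on `(ZMod m)^r` (for `m ∣ t`): reduce the
entries of `A` along `ZMod t → ZMod m` and multiply the column vector. -/
def glAction {r m t : ℕ} (hmt : m ∣ t) (A : Matrix.GeneralLinearGroup (Fin r) (ZMod t))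
    (x : Fin r → ZMod m) : Fin r → ZMod m :=
  ((A : Matrix (Fin r) (Fin r) (ZMod t)).map (ZMod.castHom hmt (ZMod m))).mulVec x

open Matrix in
/-- Euclidean reduction: an integer vector is `GL_r(ℤ)`-equivalent to `c e_k`, `c ≥ 0`. -/
theorem intVec_reduce {r : ℕ} (k : Fin r) : ∀ (n : ℕ) (x : Fin r → ℤ),
    (∑ i, (x i).natAbs) ≤ n →
    ∃ (A : GL (Fin r) ℤ) (c : ℕ), (A : Matrix (Fin r) (Fin r) ℤ) *ᵥ x = Pi.single k (c : ℤ) := by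
  intro n
  induction n with
  | zero =>
    intro x hx
    refine ⟨1, 0, ?_⟩
    have h0 : ∀ i, x i = 0 := by
      intro i
      have := Finset.single_le_sum (f := fun i => (x i).natAbs) (fun _ _ => Nat.zero_le _)
        (Finset.mem_univ i)
      omega
    ext i
    simp [h0]
  | succ n ih =>
    intro x hx
    by_cases H : ∃ i j, i ≠ j ∧ x i ≠ 0 ∧ x j ≠ 0 ∧ (x i).natAbs ≤ (x j).natAbs
    · obtain ⟨i, j, hij, hi, hj, hle⟩ := H
      obtain ⟨s, hs⟩ : ∃ s : ℤ, (x j + s * x i).natAbs < (x j).natAbs := by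
        rcases lt_or_gt_of_ne hi with h1 | h1 <;> rcases lt_or_gt_of_ne hj with h2 | h2
        · exact ⟨-1, by omega⟩
        · exact ⟨1, by omega⟩
        · exact ⟨1, by omega⟩
        · exact ⟨-1, by omega⟩
      let T : GL (Fin r) ℤ :=
        ((SpecialLinearGroup.transvection hij.symm s : SpecialLinearGroup (Fin r) ℤ) : GL (Fin r) ℤ)
      have hT : (T : Matrix (Fin r) (Fin r) ℤ) = Matrix.transvection j i s := rfl
      have hTx : (T : Matrix (Fin r) (Fin r) ℤ) *ᵥ x = Function.update x j (x j + s * x i) := by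
        rw [hT]
        ext l
        by_cases hl : l = j
        · subst hl
          simp [transvection, add_mulVec, single_mulVec]
        · simp [transvection, add_mulVec, single_mulVec, hl]
      obtain ⟨A, c, hA⟩ := ih (Function.update x j (x j + s * x i)) (by
        have : (∑ l, (Function.update x j (x j + s * x i) l).natAbs) < ∑ l, (x l).natAbs := by
          apply Finset.sum_lt_sum
          · intro l _
            by_cases hl : l = j
            · subst hl; simpa using hs.le
            · simp [hl]
          · exact ⟨j, Finset.mem_univ j, by simpa using hs⟩
        omega)
      exact ⟨A * T, c, by rw [Units.val_mul, ← mulVec_mulVec, hTx, hA]⟩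
    · have H' : ∀ i j, i ≠ j → x i ≠ 0 → x j = 0 := by
        intro i j hij hi
        by_contra hj
        rcases le_total (x i).natAbs (x j).natAbs with h | h
        · exact H ⟨i, j, hij, hi, hj, h⟩
        · exact H ⟨j, i, hij.symm, hj, hi, h⟩
      obtain ⟨i, hi⟩ : ∃ i, ∀ j, i ≠ j → x j = 0 := by
        by_cases hz : ∃ i, x i ≠ 0
        · obtain ⟨i, hi⟩ := hz
          exact ⟨i, fun j hj => H' i j hj hi⟩
        · push Not at hz
          exact ⟨k, fun j _ => hz j⟩
      have hS : ((GeneralLinearGroup.swap ℤ i k : GL (Fin r) ℤ) : Matrix (Fin r) (Fin r) ℤ) *ᵥ x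
          = Pi.single k (x i) := by
        change Matrix.swap ℤ i k *ᵥ x = _
        rw [swap_mulVec]
        ext l
        by_cases hl : l = k
        · subst hl; simp
        · rw [Pi.single_eq_of_ne hl]
          apply hi
          intro h
          apply hl
          have := congrArg (Equiv.swap i k) h
          simpa using this.symm
      rcases Int.natAbs_eq (x i) with h | h
      · exact ⟨_, (x i).natAbs, by rw [hS, ← h]⟩
      · refine ⟨-GeneralLinearGroup.swap ℤ i k, (x i).natAbs, ?_⟩
        rw [Units.val_neg, neg_mulVec, hS, ← Pi.single_neg]
        congr 1
        omega

theorem dvd_val_iff {m d : ℕ} (hd : d ∣ m) (a : ZMod m) : d ∣ a.val ↔ (d : ZMod m) ∣ a := by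
  rcases Nat.eq_zero_or_pos m with rfl | hm
  · exact Int.natCast_dvd.symm
  · have : NeZero m := ⟨hm.ne'⟩
    constructor
    · intro h
      rw [← ZMod.natCast_zmod_val a]
      exact Nat.cast_dvd_cast h
    · rintro ⟨b, rfl⟩
      rw [← ZMod.natCast_zmod_val b, ← Nat.cast_mul, ZMod.val_natCast]
      exact (Nat.dvd_mod_iff hd).2 (Dvd.intro _ rfl)

theorem dvd_gcdZMod_iff {r m d : ℕ} (x : Fin r → ZMod m) :
    d ∣ gcdZMod x ↔ d ∣ m ∧ ∀ i, (d : ZMod m) ∣ x i := by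
  unfold gcdZMod
  rw [Nat.dvd_gcd_iff, Finset.dvd_gcd_iff]
  constructor
  · rintro ⟨h, h'⟩
    exact ⟨h, fun i => (dvd_val_iff h _).1 (h' i (Finset.mem_univ i))⟩
  · rintro ⟨h, h'⟩
    exact ⟨h, fun i _ => (dvd_val_iff h _).2 (h' i)⟩

theorem gcdZMod_dvd_mulVec {r m : ℕ} (M : Matrix (Fin r) (Fin r) (ZMod m)) (x : Fin r → ZMod m) :
    gcdZMod x ∣ gcdZMod (M.mulVec x) := by
  obtain ⟨h, h'⟩ := (dvd_gcdZMod_iff x).1 dvd_rfl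
  exact (dvd_gcdZMod_iff _).2 ⟨h, fun i => by
    unfold Matrix.mulVec dotProduct
    exact Finset.dvd_sum fun j _ => Dvd.dvd.mul_left (h' j) _⟩

theorem glAction_mul {r m t : ℕ} (hmt : m ∣ t) (A B : Matrix.GeneralLinearGroup (Fin r) (ZMod t))
    (x : Fin r → ZMod m) : glAction hmt (A * B) x = glAction hmt A (glAction hmt B x) := by
  unfold glAction
  rw [Matrix.mulVec_mulVec, Units.val_mul, Matrix.map_mul]

theorem glAction_one {r m t : ℕ} (hmt : m ∣ t) (x : Fin r → ZMod m) :
    glAction hmt 1 x = x := by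
  unfold glAction
  rw [Units.val_one, Matrix.map_one _ (map_zero _) (map_one _), Matrix.one_mulVec]

theorem gcdZMod_glAction {r m t : ℕ} (hmt : m ∣ t)
    (A : Matrix.GeneralLinearGroup (Fin r) (ZMod t)) (x : Fin r → ZMod m) :
    gcdZMod (glAction hmt A x) = gcdZMod x := by
  apply Nat.dvd_antisymm
  · have h : glAction hmt A⁻¹ (glAction hmt A x) = x := by
      rw [← glAction_mul, inv_mul_cancel, glAction_one]
    conv_rhs => rw [← h]
    exact gcdZMod_dvd_mulVec _ _
  · exact gcdZMod_dvd_mulVec _ _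

/-- Integer reduction transported to `ZMod m`. -/
theorem glAction_reduce {r m t : ℕ} (hmt : m ∣ t) (k : Fin r) (x : Fin r → ℤ) :
    ∃ (A : Matrix.GeneralLinearGroup (Fin r) (ZMod t)) (c : ℕ),
      (c : ℤ) = Finset.univ.gcd x ∧
      glAction hmt A (fun i => (x i : ZMod m)) = Pi.single k (c : ZMod m) := by
  obtain ⟨A, c, hA⟩ := intVec_reduce k _ x le_rfl
  refine ⟨Matrix.GeneralLinearGroup.map (Int.castRingHom (ZMod t)) A, c, ?_, ?_⟩
  · have key : ∀ (M : Matrix (Fin r) (Fin r) ℤ) (y : Fin r → ℤ),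
        Finset.univ.gcd y ∣ Finset.univ.gcd (M.mulVec y) := by
      intro M y
      refine Finset.dvd_gcd fun i _ => ?_
      unfold Matrix.mulVec dotProduct
      refine Finset.dvd_sum fun j _ => Dvd.dvd.mul_left ?_ _
      exact Finset.gcd_dvd (Finset.mem_univ j)
    have hc : (c : ℤ) = Finset.univ.gcd (Pi.single k (c : ℤ) : Fin r → ℤ) := by
      apply Int.dvd_antisymm (Int.natCast_nonneg _)
        (Int.nonneg_of_normalize_eq_self (Finset.normalize_gcd))
      · refine Finset.dvd_gcd fun i _ => ?_
        by_cases h : i = k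
        · subst h; simp
        · simp [h]
      · simpa using Finset.gcd_dvd (f := (Pi.single k (c : ℤ) : Fin r → ℤ)) (Finset.mem_univ k)
    rw [hc]
    apply Int.dvd_antisymm (Int.nonneg_of_normalize_eq_self (Finset.normalize_gcd))
        (Int.nonneg_of_normalize_eq_self (Finset.normalize_gcd))
    · have h : (↑A⁻¹ : Matrix (Fin r) (Fin r) ℤ).mulVec (Pi.single k (c : ℤ)) = x := by
        rw [← hA, Matrix.mulVec_mulVec, ← Units.val_mul, inv_mul_cancel, Units.val_one,
          Matrix.one_mulVec]
      conv_rhs => rw [← h]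
      exact key _ _
    · rw [← hA]
      exact key _ _
  · have h1 : ∀ i, ((Int.castRingHom (ZMod m)) (Matrix.mulVec (A : Matrix _ _ ℤ) x i)) =
        (Pi.single k (c : ZMod m) : Fin r → ZMod m) i := by
      intro i
      rw [hA]
      by_cases h : i = k
      · subst h; simp
      · simp [h]
    ext i
    rw [← h1 i]
    simp [glAction, Matrix.mulVec, dotProduct]

theorem glAction_normal {r m t : ℕ} (hr : 2 ≤ r) (hmt : m ∣ t) (g : Fin r → ZMod m) :
    ∃ A : Matrix.GeneralLinearGroup (Fin r) (ZMod t),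
      glAction hmt A g = Pi.single ⟨0, by omega⟩ (gcdZMod g : ZMod m) := by
  set k : Fin r := ⟨0, by omega⟩ with hk
  let l : Fin r := ⟨1, by omega⟩
  have hlk : l ≠ k := by simp [l, hk, Fin.ext_iff]
  obtain ⟨y, hy⟩ : ∃ y : Fin r → ℤ, (fun i => (y i : ZMod m)) = g :=
    ⟨fun i => (ZMod.intCast_surjective (g i)).choose, by
      ext i; exact (ZMod.intCast_surjective (g i)).choose_spec⟩
  obtain ⟨A, c, -, hA⟩ := glAction_reduce hmt k y
  rw [hy] at hA
  let z : Fin r → ℤ := Function.update (Pi.single k (c : ℤ)) l (m : ℤ)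
  have hz : (fun i => (z i : ZMod m)) = Pi.single k (c : ZMod m) := by
    ext i
    by_cases h : i = l
    · subst h; simp [z, hlk]
    · by_cases h' : i = k
      · subst h'; simp [z, h]
      · simp [z, h, h']
  obtain ⟨B, d, hd, hB⟩ := glAction_reduce hmt k z
  rw [hz] at hB
  have hBA : glAction hmt (B * A) g = Pi.single k (d : ZMod m) := by
    rw [glAction_mul, hA, hB]
  have hdm : d ∣ m := by
    have : (d : ℤ) ∣ z l := by rw [hd]; exact Finset.gcd_dvd (Finset.mem_univ l)
    simpa [z, Int.natCast_dvd_natCast] using this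
  have hgd : gcdZMod g = d := by
    rw [← gcdZMod_glAction hmt (B * A) g, hBA]
    apply Nat.dvd_antisymm
    · obtain ⟨h1, h2⟩ := (dvd_gcdZMod_iff (Pi.single k (d : ZMod m) : Fin r → ZMod m)).1 dvd_rfl
      have h3 := h2 k
      rw [Pi.single_eq_same, ← dvd_val_iff h1] at h3
      rw [ZMod.val_natCast] at h3
      exact (Nat.dvd_mod_iff h1).1 h3
    · refine (dvd_gcdZMod_iff _).2 ⟨hdm, fun i => ?_⟩
      by_cases h : i = k
      · subst h; simp
      · simp [h]
  exact ⟨B * A, by rw [hBA, hgd]⟩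

theorem orbit_iff_gcd_eq (r m t : ℕ) (hr : 2 ≤ r) (hmt : m ∣ t)
    (g h : Fin r → ZMod m) :
    (∃ A : Matrix.GeneralLinearGroup (Fin r) (ZMod t), glAction hmt A g = h) ↔
      gcdZMod g = gcdZMod h := by
  constructor
  · rintro ⟨A, rfl⟩
    exact (gcdZMod_glAction hmt A g).symm
  · intro H
    obtain ⟨A, hA⟩ := glAction_normal hr hmt g
    obtain ⟨B, hB⟩ := glAction_normal hr hmt h
    refine ⟨B⁻¹ * A, ?_⟩
    rw [glAction_mul, hA, H, ← hB, ← glAction_mul, inv_mul_cancel, glAction_one]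
end

section
/- Let r ≥ 2 and let m, t be natural numbers with m ∣ t. Let x = (x_1,…,x_r) ∈ (ZMod m)^r and let d = gcd_m(x_1,…,x_r). Then there exists a matrix A ∈ GL_r(ZMod t) such that A·x (the action of A on x by matrix multiplication after entrywise reduction mod m) equals the vector whose first coordinate is the image of d in ZMod m and whose remaining coordinates are 0. -/
theorem aux_reduce {r : ℕ} (i0 : Fin r) (n : ℕ) : ∀ X : Fin r → ℤ, (∑ i, (X i).natAbs) ≤ n →
    ∃ B : Matrix (Fin r) (Fin r) ℤ, IsUnit B ∧ ∃ g : ℕ, B.mulVec X = Pi.single i0 (g : ℤ) := by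
  induction n with
  | zero =>
    intro X hX
    refine ⟨1, isUnit_one, 0, ?_⟩
    have h : ∀ i, X i = 0 := by simpa [Finset.sum_eq_zero_iff] using hX
    ext i
    simp [h]
  | succ n ih =>
    intro X hX
    by_cases h : ∃ i j, i ≠ j ∧ X i ≠ 0 ∧ X j ≠ 0
    · have h' : ∃ i j, i ≠ j ∧ X i ≠ 0 ∧ (X i).natAbs ≤ (X j).natAbs := by
        obtain ⟨i, j, hij, hi, hj⟩ := h
        rcases le_total (X i).natAbs (X j).natAbs with h | h
        · exact ⟨i, j, hij, hi, h⟩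
        · exact ⟨j, i, hij.symm, hj, h⟩
      obtain ⟨i, j, hij, hi, hle⟩ := h'
      obtain ⟨c, hc⟩ : ∃ c : ℤ, (X j + c * X i).natAbs < (X j).natAbs := by
        by_cases hs : (X i < 0 ↔ X j < 0)
        · exact ⟨-1, by omega⟩
        · exact ⟨1, by omega⟩
      have hmul : (Matrix.transvection j i c).mulVec X
          = Function.update X j (X j + c * X i) := by
        ext k
        rw [Matrix.transvection, Matrix.add_mulVec, Matrix.one_mulVec, Pi.add_apply,
          Matrix.single_mulVec]
        by_cases hk : k = j
        · subst hk; simp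
        · simp [hk]
      obtain ⟨B, hB, g, hg⟩ := ih (Function.update X j (X j + c * X i)) (by
        refine Nat.le_of_lt_succ (lt_of_lt_of_le ?_ hX)
        apply Finset.sum_lt_sum
        · intro k _
          by_cases hk : k = j
          · subst hk; simpa using hc.le
          · simp [hk]
        · exact ⟨j, Finset.mem_univ _, by simpa using hc⟩)
      refine ⟨B * Matrix.transvection j i c, hB.mul ?_, g, ?_⟩
      · rw [Matrix.isUnit_iff_isUnit_det, Matrix.det_transvection_of_ne _ _ hij.symm]
        exact isUnit_one
      · rw [← Matrix.mulVec_mulVec, hmul, hg]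
    · push Not at h
      by_cases hz : ∀ i, X i = 0
      · refine ⟨1, isUnit_one, 0, ?_⟩
        ext i
        simp [hz]
      push Not at hz
      obtain ⟨i, hi⟩ := hz
      have hX' : X = Pi.single i (X i) := by
        ext k
        by_cases hk : k = i
        · subst hk; simp
        · simp [hk, h i k (Ne.symm hk) hi]
      obtain ⟨s, hs, hsg⟩ : ∃ s : ℤ, IsUnit s ∧ s * X i = ((X i).natAbs : ℤ) := by
        rcases le_total 0 (X i) with h0 | h0
        · exact ⟨1, isUnit_one, by omega⟩
        · exact ⟨-1, isUnit_one.neg, by omega⟩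
      refine ⟨s • (Equiv.swap i i0).permMatrix ℤ, ?_, (X i).natAbs, ?_⟩
      · rw [Matrix.isUnit_iff_isUnit_det, Matrix.det_smul, Matrix.det_permutation]
        refine (hs.pow _).mul ?_
        exact ((Equiv.Perm.sign (Equiv.swap i i0)).isUnit).map (Int.castRingHom ℤ)
      · rw [Matrix.smul_mulVec, Matrix.permMatrix_mulVec, ← hsg]
        ext k
        rw [hX']
        by_cases hk : k = i0
        · subst hk; simp
        · have : Equiv.swap i i0 k ≠ i := by
            intro hh
            apply hk
            rw [← Equiv.swap_apply_left i i0] at hh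
            have := congrArg (Equiv.swap i i0) hh
            simp at this
            exact this
          simp [hk, this]

theorem aux_dvd_mulVec {r : ℕ} (B : Matrix (Fin r) (Fin r) ℤ) (X : Fin r → ℤ) (d : ℤ)
    (h : ∀ i, d ∣ X i) (i : Fin r) : d ∣ B.mulVec X i := by
  rw [Matrix.mulVec, dotProduct]
  exact Finset.dvd_sum fun j _ => (h j).mul_left _

theorem aux_gcd {r : ℕ} (i0 : Fin r) (X : Fin r → ℤ) :
    ∃ B : Matrix (Fin r) (Fin r) ℤ, IsUnit B ∧ ∃ g : ℕ, B.mulVec X = Pi.single i0 (g : ℤ) ∧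
      ∀ d : ℤ, d ∣ g ↔ ∀ i, d ∣ X i := by
  obtain ⟨B, hB, g, hg⟩ := aux_reduce i0 _ X le_rfl
  refine ⟨B, hB, g, hg, fun d => ⟨fun hd => ?_, fun hd => ?_⟩⟩
  · obtain ⟨u, rfl⟩ := hB
    have : X = (↑u⁻¹ : Matrix (Fin r) (Fin r) ℤ).mulVec (Pi.single i0 (g : ℤ)) := by
      rw [← hg, Matrix.mulVec_mulVec, Units.inv_mul, Matrix.one_mulVec]
    rw [this]
    apply aux_dvd_mulVec
    intro k
    by_cases hk : k = i0
    · subst hk; simpa using hd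
    · simp [hk]
  · have := aux_dvd_mulVec B X d hd i0
    simpa [hg] using this

theorem aux_cast {m : ℕ} (a : ZMod m) : ∃ z : ℤ, (z : ZMod m) = a ∧ z.natAbs = a.val := by
  cases m with
  | zero => exact ⟨a, rfl, rfl⟩
  | succ k => exact ⟨(a.val : ℕ), by simp, Int.natAbs_natCast _⟩

theorem aux_map {r m : ℕ} (B : Matrix (Fin r) (Fin r) ℤ) (X : Fin r → ℤ) :
    (B.map (Int.castRingHom (ZMod m))).mulVec (fun i => (X i : ZMod m))
      = fun i => ((B.mulVec X i : ℤ) : ZMod m) := by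
  ext i
  exact ((Int.castRingHom (ZMod m)).map_mulVec B X i).symm

theorem exists_gl_action_eq_gcd_vector (r m t : ℕ) (hr : 2 ≤ r) (hmt : m ∣ t)
    (x : Fin r → ZMod m) :
    ∃ A : Matrix.GeneralLinearGroup (Fin r) (ZMod t),
      glAction hmt A x = fun i : Fin r => if (i : ℕ) = 0 then ((gcdZMod x : ℕ) : ZMod m) else 0 := by
  choose X hX hXv using fun i => aux_cast (x i)
  let i0 : Fin r := ⟨0, by omega⟩
  let i1 : Fin r := ⟨1, by omega⟩
  have h01 : i0 ≠ i1 := by simp [i0, i1]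
  obtain ⟨B, hB, g, hg, hgd⟩ := aux_gcd i0 X
  obtain ⟨C, hC, e, he, hed⟩ := aux_gcd i0 (Pi.single i0 (g : ℤ) + Pi.single i1 (m : ℤ))
  have hde : gcdZMod x = e := by
    have key : ∀ d : ℕ, d ∣ gcdZMod x ↔ d ∣ e := by
      intro d
      rw [← Int.natCast_dvd_natCast (n := e), hed, gcdZMod, Nat.dvd_gcd_iff, Finset.dvd_gcd_iff]
      have h1 : (∀ i ∈ (Finset.univ : Finset (Fin r)), d ∣ (x i).val) ↔ (d : ℤ) ∣ g := by
        rw [hgd]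
        simp [← hXv, Int.natCast_dvd]
      rw [h1]
      constructor
      · rintro ⟨hm, hg'⟩ i
        refine dvd_add ?_ ?_
        · by_cases hk : i = i0
          · subst hk; simpa using hg'
          · simp [hk]
        · by_cases hk : i = i1
          · subst hk; simpa using Int.natCast_dvd_natCast.2 hm
          · simp [hk]
      · intro h
        have ha := h i0
        have hb := h i1
        simp [h01, h01.symm] at ha hb
        exact ⟨Int.natCast_dvd_natCast.1 hb, ha⟩
    exact Nat.dvd_antisymm ((key _).1 dvd_rfl) ((key _).2 dvd_rfl)
  have hU : IsUnit ((C * B).map (Int.castRingHom (ZMod t))) :=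
    (hC.mul hB).map (Int.castRingHom (ZMod t)).mapMatrix
  obtain ⟨A, hA⟩ := hU
  refine ⟨A, ?_⟩
  have hAm : ((A : Matrix (Fin r) (Fin r) (ZMod t)).map (ZMod.castHom hmt (ZMod m)))
      = (C * B).map (Int.castRingHom (ZMod m)) := by
    rw [hA]
    ext i j
    simp
  have hx : x = fun i => (X i : ZMod m) := by
    ext i; exact (hX i).symm
  rw [glAction, hAm, hde]
  conv_lhs => rw [hx]
  rw [Matrix.map_mul, ← Matrix.mulVec_mulVec, aux_map, hg]
  have h2 : (fun i => ((Pi.single i0 (g : ℤ) : Fin r → ℤ) i : ZMod m))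
      = fun i => (((Pi.single i0 (g : ℤ) + Pi.single i1 (m : ℤ) : Fin r → ℤ) i : ℤ) : ZMod m) := by
    ext i
    by_cases hk : i = i1
    · subst hk; simp
    · simp [hk]
  rw [h2, aux_map, he]
  ext i
  by_cases hk : i = i0
  · subst hk; simp [i0]
  · have : (i : ℕ) ≠ 0 := fun h => hk (Fin.ext h)
    simp [hk, this]
end

section
/- Let m ≥ 1. For every r × t matrix A with entries in ZMod m, there exists an invertible matrix D ∈ GL_r(ℤ) such that the product D̄·A is in row echelon form, where D̄ denotes the image of D in Mat_r(ZMod m) under entrywise reduction mod m. -/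
/-- A matrix is in row echelon form if (i) among any two nonzero rows, the leading
(first nonzero) entry of the upper row lies strictly to the left of the leading entry
of the lower row, and (ii) every zero row lies below every nonzero row. -/
def IsRowEchelon {r t : ℕ} {R : Type*} [Zero R] (B : Matrix (Fin r) (Fin t) R) : Prop :=
  (∀ i i' : Fin r, i < i' → ∀ j j' : Fin t,
      (B i j ≠ 0 ∧ ∀ j₀, j₀ < j → B i j₀ = 0) →
      (B i' j' ≠ 0 ∧ ∀ j₀, j₀ < j' → B i' j₀ = 0) → j < j') ∧
  (∀ i i' : Fin r, i < i' → (∀ j, B i j = 0) → ∀ j, B i' j = 0)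

open Matrix in
lemma column_reduce (r : ℕ) (v : Fin (r+1) → ℤ) :
    ∃ D : Matrix (Fin (r+1)) (Fin (r+1)) ℤ, IsUnit D ∧ ∀ i, i ≠ 0 → (D *ᵥ v) i = 0 := by
  classical
  let S : Set (Matrix (Fin (r+1)) (Fin (r+1)) ℤ) := {D | IsUnit D}
  let f : Matrix (Fin (r+1)) (Fin (r+1)) ℤ → ℕ := fun D => ∑ i, ((D *ᵥ v) i).natAbs
  obtain ⟨D, hD, hmin⟩ : ∃ D, IsUnit D ∧ ∀ E, IsUnit E → f D ≤ f E := by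
    have hne : S.Nonempty := ⟨1, isUnit_one⟩
    exact ⟨Function.argminOn f S hne, Function.argminOn_mem f S hne,
      fun E hE => Function.argminOn_le f S hE⟩
  have key : ∀ i j, i ≠ j → (D *ᵥ v) j ≠ 0 → ((D *ᵥ v) j).natAbs ≤ ((D *ᵥ v) i).natAbs →
      False := by
    intro i j hij hj hle
    set w := D *ᵥ v with hw
    have hT : IsUnit (transvection i j (-(w i / w j))) := by
      rw [Matrix.isUnit_iff_isUnit_det, det_transvection_of_ne i j hij]
      exact isUnit_one
    have h := hmin _ (hT.mul hD)
    refine absurd h (not_le.mpr ?_)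
    have hval : ∀ k, ((transvection i j (-(w i / w j)) * D) *ᵥ v) k
        = if k = i then w i % w j else w k := by
      intro k
      rw [← Matrix.mulVec_mulVec, ← hw, transvection, Matrix.add_mulVec, Matrix.one_mulVec]
      simp only [Pi.add_apply, Matrix.mulVec, dotProduct, Matrix.single_apply]
      split_ifs with hk
      · subst hk
        simp
        rw [Int.emod_def]; ring
      · simp [Ne.symm hk]
    have hlt : (w i % w j).natAbs < (w i).natAbs := by
      have h1 := Int.emod_nonneg (w i) hj
      have h2 := Int.emod_lt_abs (w i) hj
      rw [Int.abs_eq_natAbs] at h2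
      generalize w i % w j = q at *
      omega
    refine Finset.sum_lt_sum (fun k _ => ?_) ⟨i, Finset.mem_univ _, ?_⟩
    · rw [hval]
      split_ifs with hk
      · subst hk; exact hlt.le
      · exact le_rfl
    · rw [hval, if_pos rfl]; exact hlt
  have uniq : ∀ i j, (D *ᵥ v) i ≠ 0 → (D *ᵥ v) j ≠ 0 → i = j := by
    intro i j hi hj
    by_contra hij
    rcases le_total ((D *ᵥ v) j).natAbs ((D *ᵥ v) i).natAbs with h | h
    · exact key i j hij hj h
    · exact key j i (Ne.symm hij) hi h
  by_cases hz : ∃ k, (D *ᵥ v) k ≠ 0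
  · obtain ⟨k, hk⟩ := hz
    refine ⟨(Equiv.swap 0 k).permMatrix ℤ * D, IsUnit.mul ?_ hD, ?_⟩
    · rw [Matrix.isUnit_iff_isUnit_det, Matrix.det_permutation]
      exact (Equiv.Perm.sign (Equiv.swap 0 k)).isUnit.map (Int.castRingHom ℤ)
    · intro i hi
      rw [← Matrix.mulVec_mulVec, Matrix.permMatrix_mulVec]
      by_contra h
      have := uniq _ _ h hk
      apply hi
      have h2 : Equiv.swap 0 k i = Equiv.swap 0 k 0 := by simpa using this
      exact (Equiv.swap 0 k).injective h2
  · push Not at hz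
    exact ⟨D, hD, fun i _ => hz i⟩

def extendMat {r : ℕ} (D : Matrix (Fin r) (Fin r) ℤ) : Matrix (Fin (r+1)) (Fin (r+1)) ℤ :=
  Matrix.of (Fin.cons (Fin.cons 1 0) (fun i => Fin.cons 0 (D i)))

lemma extendMat_mul {r : ℕ} (D E : Matrix (Fin r) (Fin r) ℤ) :
    extendMat D * extendMat E = extendMat (D * E) := by
  ext i j
  refine Fin.cases ?_ (fun i => ?_) i <;> refine Fin.cases ?_ (fun j => ?_) j <;>
    simp [extendMat, Matrix.mul_apply, Fin.sum_univ_succ]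

lemma extendMat_one {r : ℕ} : extendMat (1 : Matrix (Fin r) (Fin r) ℤ) = 1 := by
  ext i j
  refine Fin.cases ?_ (fun i => ?_) i <;> refine Fin.cases ?_ (fun j => ?_) j <;>
    simp [extendMat, Matrix.one_apply, Fin.succ_ne_zero, (Fin.succ_ne_zero _).symm]

lemma extendMat_isUnit {r : ℕ} {D : Matrix (Fin r) (Fin r) ℤ} (h : IsUnit D) :
    IsUnit (extendMat D) := by
  obtain ⟨u, rfl⟩ := h
  refine ⟨⟨extendMat u.val, extendMat u.inv, ?_, ?_⟩, rfl⟩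
  · rw [extendMat_mul, u.val_inv, extendMat_one]
  · rw [extendMat_mul, u.inv_val, extendMat_one]

lemma echelon_aux (t m : ℕ) (r : ℕ) : ∀ A : Matrix (Fin r) (Fin t) (ZMod m),
    ∃ D : Matrix (Fin r) (Fin r) ℤ, IsUnit D ∧
      IsRowEchelon ((D.map (Int.cast : ℤ → ZMod m)) * A) := by
  classical
  induction r with
  | zero => exact fun A => ⟨1, isUnit_one, fun i => i.elim0, fun i => i.elim0⟩
  | succ r ih =>
    intro A
    by_cases hA : ∃ j, ∃ i, A i j ≠ 0
    swap
    · push Not at hA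
      have : A = 0 := by ext i j; exact hA j i
      subst this
      refine ⟨1, isUnit_one, ?_⟩
      rw [Matrix.mul_zero]
      exact ⟨fun i i' _ j j' h => absurd rfl h.1, fun _ _ _ _ _ => rfl⟩
    obtain ⟨j, ⟨i₀, hi₀⟩, hjmin⟩ : ∃ j, (∃ i, A i j ≠ 0) ∧ ∀ j', j' < j → ∀ i, A i j' = 0 := by
      obtain ⟨j, hj, hmin⟩ := WellFounded.has_min (wellFounded_lt : WellFounded ((· < ·) : Fin t → Fin t → Prop)) {j | ∃ i, A i j ≠ 0} hA
      refine ⟨j, hj, fun j' hj' i => ?_⟩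
      by_contra h
      exact hmin j' ⟨i, h⟩ hj'
    choose v hv using fun i => ZMod.intCast_surjective (A i j)
    obtain ⟨D, hD, hDv⟩ := column_reduce r v
    set B := D.map (Int.cast : ℤ → ZMod m) * A with hB
    have hBlt : ∀ i j', j' < j → B i j' = 0 := by
      intro i j' h
      simp [hB, Matrix.mul_apply, hjmin j' h]
    have hBj : ∀ i, i ≠ 0 → B i j = 0 := by
      intro i hi
      have := congrArg (Int.cast : ℤ → ZMod m) (hDv i hi)
      simp only [Matrix.mulVec, dotProduct, Int.cast_sum, Int.cast_mul, hv, Int.cast_zero] at this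
      simpa [hB, Matrix.mul_apply] using this
    have hmap : ∀ {n : ℕ} (X Y : Matrix (Fin n) (Fin n) ℤ),
        (X * Y).map (Int.cast : ℤ → ZMod m) = X.map Int.cast * Y.map Int.cast :=
      fun X Y => Matrix.map_mul (f := Int.castRingHom (ZMod m))
    have hB0 : B 0 j ≠ 0 := by
      intro h0
      have hall : ∀ i, B i j = 0 := fun i => by
        by_cases hi : i = 0
        · rw [hi]; exact h0
        · exact hBj i hi
      obtain ⟨u, hu⟩ := hD
      have hAB : A = (u.inv.map (Int.cast : ℤ → ZMod m)) * B := by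
        rw [hB, ← Matrix.mul_assoc, ← hmap, ← hu, u.inv_val]
        simp
      apply hi₀
      rw [hAB]
      simp [Matrix.mul_apply, hall]
    obtain ⟨D', hD', hE1, hE2⟩ := ih (B.submatrix Fin.succ id)
    set C := D'.map (Int.cast : ℤ → ZMod m) * B.submatrix Fin.succ id with hC
    have hCle : ∀ i j', j' ≤ j → C i j' = 0 := by
      intro i j' h
      rw [hC, Matrix.mul_apply]
      refine Finset.sum_eq_zero fun k _ => ?_
      rcases h.lt_or_eq with h | h
      · simp [hBlt _ _ h]
      · simp [h, hBj _ (Fin.succ_ne_zero k)]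
    refine ⟨extendMat D' * D, (extendMat_isUnit hD').mul hD, ?_⟩
    rw [hmap, Matrix.mul_assoc, ← hB]
    set F := (extendMat D').map (Int.cast : ℤ → ZMod m) * B with hF
    have hF0 : ∀ j', F 0 j' = B 0 j' := by
      intro j'
      simp [hF, Matrix.mul_apply, Fin.sum_univ_succ, extendMat]
    have hFs : ∀ i j', F (Fin.succ i) j' = C i j' := by
      intro i j'
      simp [hF, hC, Matrix.mul_apply, Fin.sum_univ_succ, extendMat]
    refine ⟨?_, ?_⟩
    · intro i i'
      refine Fin.cases ?_ (fun i' => ?_) i'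
      · intro h; exact absurd h (Fin.not_lt_zero _)
      refine Fin.cases ?_ (fun i => ?_) i
      · intro _ j₁ j₂ h1 h2
        simp only [hF0, hFs] at h1 h2
        have a1 : j₁ ≤ j := by
          by_contra h
          exact hB0 (h1.2 j (not_le.mp h))
        have a2 : j < j₂ := by
          by_contra h
          exact h2.1 (hCle _ _ (not_lt.mp h))
        exact a1.trans_lt a2
      · intro h j₁ j₂ h1 h2
        simp only [hFs] at h1 h2
        exact hE1 i i' (Fin.succ_lt_succ_iff.mp h) j₁ j₂ h1 h2
    · intro i i'
      refine Fin.cases ?_ (fun i' => ?_) i'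
      · intro h; exact absurd h (Fin.not_lt_zero _)
      refine Fin.cases ?_ (fun i => ?_) i
      · intro _ h
        exact absurd ((hF0 j).symm.trans (h j)) hB0
      · intro h h1
        simp only [hFs] at h1 ⊢
        exact hE2 i i' (Fin.succ_lt_succ_iff.mp h) h1

theorem exists_gl_int_mul_isRowEchelon_zmod (r t m : ℕ) (hm : 1 ≤ m)
    (A : Matrix (Fin r) (Fin t) (ZMod m)) :
    ∃ D : Matrix.GeneralLinearGroup (Fin r) ℤ,
      IsRowEchelon (((D : Matrix (Fin r) (Fin r) ℤ).map (Int.cast : ℤ → ZMod m)) * A) := by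
  obtain ⟨D, ⟨u, rfl⟩, h⟩ := echelon_aux t m r A
  exact ⟨u, h⟩
end
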